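/- There is no infinite binary word containing at most 8 distinct palindromic factors (counting the empty word); in fact, every binary word of length at least 9 contains at least 9 distinct palindromic factors. -/

import Mathlib

def IsFactor {α : Type*} (y x : List α) : Prop := ∃ u v, x = u ++ y ++ v

def IsPal {α : Type*} (y : List α) : Prop := y.reverse = y

def PalFac {α : Type*} (x : List α) : Set (List α) := {y | IsFactor y x ∧ IsPal y}

/-- `u` is a (finite) factor of the infinite word `x`. -/
def InfFactor {α : Type*} (u : List α) (x : ℕ → α) : Prop :=
  ∃ i, u = (List.range u.length).map (fun j => x (i + j))

/-!
Every word of length at least `9` has a factor of length `9`, and passing to a factor can only lose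
palindromes; an infinite word likewise has a prefix of length `9`. So everything comes down to the
`2 ^ 9` binary words of length `9`, which are checked exhaustively.
-/

section Factors

variable {α : Type*}

theorem isFactor_iff_isInfix {y x : List α} : IsFactor y x ↔ y <:+: x := by
  simp only [IsFactor, List.IsInfix, eq_comm]

theorem palFac_subset_of_isInfix {y x : List α} (h : y <:+: x) : PalFac y ⊆ PalFac x :=
  fun _ ⟨hf, hp⟩ => ⟨isFactor_iff_isInfix.2 ((isFactor_iff_isInfix.1 hf).trans h), hp⟩

theorem infFactor_map_range (x : ℕ → α) (n : ℕ) : InfFactor ((List.range n).map x) x :=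
  ⟨0, by simp⟩

theorem InfFactor.of_isFactor {x : ℕ → α} {y w : List α} (hw : InfFactor w x)
    (hyw : IsFactor y w) : InfFactor y x := by
  obtain ⟨i, hi⟩ := hw
  obtain ⟨u, v, rfl⟩ := hyw
  refine ⟨i + u.length, ?_⟩
  simp only [List.length_append, List.range_add, List.map_append, List.map_map] at hi
  have huy := (List.append_inj hi (by simp)).1
  have hy := (List.append_inj huy (by simp)).2
  simpa only [Function.comp_def, add_assoc] using hy

end Factors

section PalindromicFactors

variable {α : Type*} [DecidableEq α]

/-- The set `PalFac w` of palindromic factors as a computable `Finset`, so that palindromes can be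
counted by evaluation. Factors are enumerated as prefixes of suffixes. -/
def palFacFinset (w : List α) : Finset (List α) :=
  ((w.tails.flatMap List.inits).filter fun y => y.reverse = y).toFinset

theorem coe_palFacFinset (w : List α) : (palFacFinset w : Set (List α)) = PalFac w := by
  ext y
  simp only [palFacFinset, PalFac, IsPal, isFactor_iff_isInfix, List.infix_iff_prefix_suffix,
    List.coe_toFinset, List.mem_filter, List.mem_flatMap, List.mem_tails, List.mem_inits,
    decide_eq_true_eq, Set.mem_ofPred_eq, and_comm]

theorem ncard_palFac (w : List α) : (PalFac w).ncard = (palFacFinset w).card := by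
  rw [← coe_palFacFinset, Set.ncard_coe_finset]

end PalindromicFactors

theorem palFac_finite {α : Type*} (w : List α) : (PalFac w).Finite := by
  classical exact coe_palFacFinset w ▸ (palFacFinset w).finite_toSet

theorem nine_le_card_palFacFinset_of_nine_letters : ∀ a b c d e f g h i : Fin 2,
    9 ≤ (palFacFinset [a, b, c, d, e, f, g, h, i]).card := by
  decide +kernel

theorem nine_le_ncard_palFac_of_length_eq {w : List (Fin 2)} (hw : w.length = 9) :
    9 ≤ (PalFac w).ncard := by
  rw [ncard_palFac]
  match w, hw with
  | [a, b, c, d, e, f, g, h, i], _ =>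
    exact nine_le_card_palFacFinset_of_nine_letters a b c d e f g h i

/-- There is no infinite binary word with at most 8 distinct palindromic factors
(counting the empty word); in fact every binary word of length at least 9 has at
least 9 distinct palindromic factors. -/
theorem no_infinite_binary_with_at_most_eight_palindromes :
    (∀ x : ℕ → Fin 2, ¬ ∃ S : Finset (List (Fin 2)), S.card ≤ 8 ∧
      ∀ u, InfFactor u x → IsPal u → u ∈ S) ∧
    (∀ w : List (Fin 2), 9 ≤ w.length → 9 ≤ (PalFac w).ncard) := by
  constructor
  · rintro x ⟨S, hcard, hS⟩
    have hsub : PalFac ((List.range 9).map x) ⊆ S := fun y ⟨hf, hp⟩ =>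
      hS y ((infFactor_map_range x 9).of_isFactor hf) hp
    have h9 : 9 ≤ (PalFac ((List.range 9).map x)).ncard :=
      nine_le_ncard_palFac_of_length_eq (by simp)
    have hle := Set.ncard_le_ncard hsub S.finite_toSet
    rw [Set.ncard_coe_finset] at hle
    omega
  · intro w hw
    calc
      9 ≤ (PalFac (w.take 9)).ncard := nine_le_ncard_palFac_of_length_eq (by simpa using hw)
      _ ≤ (PalFac w).ncard :=
        Set.ncard_le_ncard (palFac_subset_of_isInfix (List.take_prefix 9 w).isInfix)
          (palFac_finite w)
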